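/- arXiv:2201.00785 — 4 statements merged into one kernel-verified Lean document; each statement's English description precedes it below -/
import Mathlib

section
/- Let 0 < m < n and N ≥ 1. Let L be an m-dimensional linear subspace of ℝ^n, let x_1,…,x_N ∈ L, let ε_1,…,ε_N ∈ L^⊥, set x_k' = x_k + ε_k, and assume x_1',…,x_N' span ℝ^n. Consider the objective F(A,Q) = Σ_{k=1}^N ‖A Q^T x_k' − x_k‖² over pairs of matrices A, Q ∈ ℝ^{n×m} subject to Q^T Q = I_m. Then the minimum value of F is 0, and a feasible pair (A,Q) attains F(A,Q) = 0 if and only if A = Q and the columns of Q form an orthonormal basis of L. Consequently, the set of optimal encoders Q depends only on L and not on the perturbations ε_1,…,ε_N. -/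
open Matrix

/-- Every `m`-dimensional subspace of `ℝⁿ` is the column space of an `n × m` matrix with
orthonormal columns. -/
theorem exists_orthonormal_columns_range_eq {n m : ℕ} (L : Submodule ℝ (Fin n → ℝ))
    (hL : Module.finrank ℝ L = m) :
    ∃ Q : Matrix (Fin n) (Fin m) ℝ, Qᵀ * Q = 1 ∧ LinearMap.range Q.mulVecLin = L := by
  let e := (WithLp.linearEquiv 2 ℝ (Fin n → ℝ)).symm
  let L' : Submodule ℝ (EuclideanSpace ℝ (Fin n)) := L.map e.toLinearMap
  have hL' : Module.finrank ℝ L' = m := (LinearEquiv.finrank_map_eq e L).trans hL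
  let b : OrthonormalBasis (Fin m) ℝ L' := (stdOrthonormalBasis ℝ L').reindex (finCongr hL')
  let Q : Matrix (Fin n) (Fin m) ℝ := Matrix.of fun i j => (b j : EuclideanSpace ℝ (Fin n)) i
  have hQ : Qᵀ * Q = 1 := by
    ext i j
    have h := orthonormal_iff_ite.mp b.orthonormal j i
    rw [Submodule.coe_inner, EuclideanSpace.inner_eq_star_dotProduct] at h
    simpa [Matrix.mul_apply, Q, dotProduct, Matrix.one_apply, eq_comm] using h
  have hrange : LinearMap.range Q.mulVecLin ≤ L := by
    rw [Matrix.range_mulVecLin, Submodule.span_le]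
    rintro _ ⟨j, rfl⟩
    obtain ⟨v, hv, hvb⟩ := (b j).2
    have : Q.col j = v := by
      ext i
      simp [Q, ← hvb, e]
    simpa [this] using hv
  have hinj : Function.Injective Q.mulVecLin := by
    apply Function.LeftInverse.injective (g := Qᵀ.mulVecLin)
    intro v
    rw [Matrix.mulVecLin_apply, Matrix.mulVecLin_apply, Matrix.mulVec_mulVec, hQ,
      Matrix.one_mulVec]
  refine ⟨Q, hQ, Submodule.eq_of_le_of_finrank_eq hrange ?_⟩
  rw [LinearMap.finrank_range_of_inj hinj, hL, Module.finrank_fin_fun]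

/-- If `Q` has orthonormal columns spanning `L`, then `Q * Qᵀ` fixes `L` and kills vectors
orthogonal to `L`. -/
theorem mul_transpose_mulVec_add_of_range_eq {n m : ℕ} {L : Submodule ℝ (Fin n → ℝ)}
    {Q : Matrix (Fin n) (Fin m) ℝ} (hQ : Qᵀ * Q = 1) (hr : LinearMap.range Q.mulVecLin = L)
    {u w : Fin n → ℝ} (hu : u ∈ L) (hw : ∀ v ∈ L, v ⬝ᵥ w = 0) :
    (Q * Qᵀ) *ᵥ (u + w) = u := by
  subst hr
  obtain ⟨y, rfl⟩ := hu
  have hw0 : Qᵀ *ᵥ w = 0 := by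
    apply dotProduct_eq_zero
    intro z
    rw [Matrix.mulVec_transpose, ← Matrix.dotProduct_mulVec, dotProduct_comm]
    exact hw _ ⟨z, rfl⟩
  rw [← Matrix.mulVec_mulVec, Matrix.mulVec_add, hw0, Matrix.mulVecLin_apply,
    Matrix.mulVec_mulVec, hQ, Matrix.one_mulVec, add_zero]

/-- If `A * Qᵀ` is the orthogonal projection onto an `m`-dimensional `L` and the `m` columns of
`Q` are orthonormal, then `A = Q` and the columns of `Q` span `L`. -/
theorem eq_and_range_eq_of_mul_transpose_projection {n m : ℕ} {L : Submodule ℝ (Fin n → ℝ)}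
    (hL : Module.finrank ℝ L = m) {A Q : Matrix (Fin n) (Fin m) ℝ} (hQ : Qᵀ * Q = 1)
    (hmem : ∀ w, (A * Qᵀ) *ᵥ w ∈ L)
    (horth : ∀ w, ∀ v ∈ L, v ⬝ᵥ (w - (A * Qᵀ) *ᵥ w) = 0) :
    A = Q ∧ LinearMap.range Q.mulVecLin = L := by
  have hfix : ∀ v ∈ L, (A * Qᵀ) *ᵥ v = v := fun v hv =>
    (sub_eq_zero.mp <| dotProduct_self_eq_zero.mp <|
      horth v _ (L.sub_mem hv (hmem v))).symm
  have hle : L ≤ LinearMap.range Q.mulVecLin := by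
    intro v hv
    let w := v - Q *ᵥ (Qᵀ *ᵥ v)
    have hQw : Qᵀ *ᵥ w = 0 := by
      simp only [w]
      rw [Matrix.mulVec_sub, Matrix.mulVec_mulVec, hQ, Matrix.one_mulVec, sub_self]
    have hvw : v ⬝ᵥ w = 0 := by
      simpa [← Matrix.mulVec_mulVec, hQw] using horth w v hv
    have hww : w ⬝ᵥ w = 0 := by
      change (v - Q *ᵥ (Qᵀ *ᵥ v)) ⬝ᵥ w = 0
      rw [sub_dotProduct, hvw, dotProduct_comm, Matrix.dotProduct_mulVec,
        ← Matrix.mulVec_transpose, hQw, zero_dotProduct, sub_zero]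
    exact ⟨Qᵀ *ᵥ v, (sub_eq_zero.mp (dotProduct_self_eq_zero.mp hww)).symm⟩
  have hr : LinearMap.range Q.mulVecLin = L := by
    refine (Submodule.eq_of_le_of_finrank_le hle ?_).symm
    rw [hL]
    exact (LinearMap.finrank_range_le _).trans_eq (Module.finrank_fin_fun ℝ)
  refine ⟨Matrix.ext_of_mulVec_single fun j => ?_, hr⟩
  have h := hfix (Q *ᵥ Pi.single j 1) (hr ▸ ⟨_, rfl⟩)
  rwa [Matrix.mulVec_mulVec, Matrix.mul_assoc, hQ, Matrix.mul_one] at h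

/-- Linear model of the Implicit AutoEncoder: reconstructing the clean points `x k`
from the perturbed points `x' k = x k + ε k` (with `ε k ⊥ L`), the minimum of the
objective `F` over encoder/decoder pairs `(A, Q)` with `Qᵀ * Q = 1` is `0`, and a
feasible pair attains `0` iff `A = Q` and the columns of `Q` form an orthonormal
basis of `L` (orthonormality being `Qᵀ * Q = 1`, spanning being
`LinearMap.range Q.mulVecLin = L`). In particular the optimal encoders depend only
on `L`, not on the perturbations. -/
theorem stmt_0 (n m N : ℕ) (hm : 0 < m) (hmn : m < n) (hN : 1 ≤ N)
    (L : Submodule ℝ (Fin n → ℝ)) (hL : Module.finrank ℝ L = m)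
    (x ε x' : Fin N → Fin n → ℝ)
    (hx : ∀ k, x k ∈ L)
    (hε : ∀ k, ∀ v ∈ L, v ⬝ᵥ ε k = 0)
    (hx' : ∀ k, x' k = x k + ε k)
    (hspan : Submodule.span ℝ (Set.range x') = ⊤)
    (F : Matrix (Fin n) (Fin m) ℝ → Matrix (Fin n) (Fin m) ℝ → ℝ)
    (hF : ∀ A Q, F A Q =
      ∑ k, ((A * Qᵀ).mulVec (x' k) - x k) ⬝ᵥ ((A * Qᵀ).mulVec (x' k) - x k)) :
    IsLeast {r | ∃ A Q : Matrix (Fin n) (Fin m) ℝ, Qᵀ * Q = 1 ∧ F A Q = r} 0 ∧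
    ∀ A Q : Matrix (Fin n) (Fin m) ℝ, Qᵀ * Q = 1 →
      (F A Q = 0 ↔ A = Q ∧ LinearMap.range Q.mulVecLin = L) := by
  have hnonneg : ∀ v : Fin n → ℝ, 0 ≤ v ⬝ᵥ v := fun v =>
    Finset.sum_nonneg fun i _ => mul_self_nonneg (v i)
  have hzero : ∀ A Q, F A Q = 0 ↔ ∀ k, (A * Qᵀ) *ᵥ x' k = x k := by
    intro A Q
    rw [hF, Finset.sum_eq_zero_iff_of_nonneg fun k _ => hnonneg _]
    simp only [Finset.mem_univ, true_imp_iff, dotProduct_self_eq_zero, sub_eq_zero]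
  have hiff : ∀ A Q : Matrix (Fin n) (Fin m) ℝ, Qᵀ * Q = 1 →
      (F A Q = 0 ↔ A = Q ∧ LinearMap.range Q.mulVecLin = L) := by
    intro A Q hQ
    rw [hzero]
    constructor
    · intro h
      have key : ∀ w, (A * Qᵀ) *ᵥ w ∈ L ∧ ∀ v ∈ L, v ⬝ᵥ (w - (A * Qᵀ) *ᵥ w) = 0 := by
        intro w
        have hw : w ∈ Submodule.span ℝ (Set.range x') := hspan ▸ Submodule.mem_top
        induction hw using Submodule.span_induction with
        | mem w hw =>
          obtain ⟨k, rfl⟩ := hw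
          rw [h k]
          refine ⟨hx k, fun v hv => ?_⟩
          rw [hx' k, add_sub_cancel_left, hε k v hv]
        | zero => simp
        | add a b _ _ ha hb =>
          rw [Matrix.mulVec_add]
          refine ⟨L.add_mem ha.1 hb.1, fun v hv => ?_⟩
          rw [add_sub_add_comm, dotProduct_add, ha.2 v hv, hb.2 v hv, add_zero]
        | smul c a _ ha =>
          rw [Matrix.mulVec_smul]
          refine ⟨L.smul_mem c ha.1, fun v hv => ?_⟩
          rw [← smul_sub, dotProduct_smul, ha.2 v hv, smul_zero]
      exact eq_and_range_eq_of_mul_transpose_projection hL hQ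
        (fun w => (key w).1) (fun w => (key w).2)
    · rintro ⟨rfl, hr⟩ k
      rw [hx' k]
      exact mul_transpose_mulVec_add_of_range_eq hQ hr (hx k) (hε k)
  refine ⟨⟨?_, ?_⟩, hiff⟩
  · obtain ⟨Q, hQ, hr⟩ := exists_orthonormal_columns_range_eq L hL
    exact ⟨Q, Q, hQ, (hiff Q Q hQ).mpr ⟨rfl, hr⟩⟩
  · rintro _ ⟨A, Q, _, rfl⟩
    rw [hF]
    exact Finset.sum_nonneg fun k _ => hnonneg _
end

section
/- Let L be a linear subspace of ℝ^n, let x_1,…,x_N ∈ L, let ε_1,…,ε_N ∈ L^⊥, and set x_k' = x_k + ε_k. Define C = Σ_{k=1}^N x_k (x_k')^T and M = Σ_{k=1}^N x_k x_k^T. Then: (i) the column spaces of C and of M are contained in L; (ii) C v = M v for every v ∈ L; (iii) for every real λ ≠ 0 and v ∈ ℝ^n, C v = λ v if and only if M v = λ v. In particular, the eigenvectors of C with nonzero eigenvalue coincide with those of the clean covariance M, and hence are independent of the perturbations ε_1,…,ε_N. -/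
open Matrix

/-- A sum of outer products acts on `v` by the corresponding combination of the left factors. -/
theorem sum_vecMulVec_mulVec {ι m n R : Type*} [Fintype ι] [Fintype n] [CommSemiring R]
    (a : ι → m → R) (b : ι → n → R) (v : n → R) :
    (∑ k, vecMulVec (a k) (b k)) *ᵥ v = ∑ k, (b k ⬝ᵥ v) • a k := by
  simp [Matrix.sum_mulVec, vecMulVec_mulVec]

/-- If all left factors lie in `L`, so does every value of a sum of outer products. -/
theorem sum_vecMulVec_mulVec_mem {ι m n R : Type*} [Fintype ι] [Fintype n] [CommSemiring R]
    {L : Submodule R (m → R)} {a : ι → m → R} (ha : ∀ k, a k ∈ L) (b : ι → n → R) (v : n → R) :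
    (∑ k, vecMulVec (a k) (b k)) *ᵥ v ∈ L := by
  rw [sum_vecMulVec_mulVec]
  exact L.sum_mem fun k _ => L.smul_mem _ (ha k)

/-- The cross-covariance `C = Σ x_k (x'_k)ᵀ` between clean points `x_k ∈ L` and
perturbed points `x'_k = x_k + ε_k` (with `ε_k ⊥ L`) satisfies: (i) the column
spaces of `C` and of the clean covariance `M = Σ x_k x_kᵀ` are contained in `L`;
(ii) `C v = M v` for every `v ∈ L`; (iii) for every `λ ≠ 0`, `v` is a
`λ`-eigenvector of `C` iff it is one of `M`.  Hence the nonzero-eigenvalue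
eigenvectors of `C` are independent of the perturbations. -/
theorem stmt_1 (n N : ℕ)
    (L : Submodule ℝ (Fin n → ℝ))
    (x ε x' : Fin N → Fin n → ℝ)
    (hx : ∀ k, x k ∈ L)
    (hε : ∀ k, ∀ v ∈ L, v ⬝ᵥ ε k = 0)
    (hx' : ∀ k, x' k = x k + ε k)
    (C M : Matrix (Fin n) (Fin n) ℝ)
    (hC : C = ∑ k, vecMulVec (x k) (x' k))
    (hM : M = ∑ k, vecMulVec (x k) (x k)) :
    (LinearMap.range C.mulVecLin ≤ L ∧ LinearMap.range M.mulVecLin ≤ L) ∧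
    (∀ v ∈ L, C.mulVec v = M.mulVec v) ∧
    (∀ lam : ℝ, lam ≠ 0 → ∀ v : Fin n → ℝ,
      (C.mulVec v = lam • v ↔ M.mulVec v = lam • v)) := by
  have hCL : ∀ v, C *ᵥ v ∈ L := fun v => hC ▸ sum_vecMulVec_mulVec_mem hx x' v
  have hML : ∀ v, M *ᵥ v ∈ L := fun v => hM ▸ sum_vecMulVec_mulVec_mem hx x v
  have hCM : ∀ v ∈ L, C *ᵥ v = M *ᵥ v := by
    intro v hv
    rw [hC, hM, sum_vecMulVec_mulVec, sum_vecMulVec_mulVec]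
    refine Finset.sum_congr rfl fun k _ => ?_
    rw [hx' k, add_dotProduct, dotProduct_comm (ε k), hε k v hv, add_zero]
  refine ⟨⟨?_, ?_⟩, hCM, fun lam hlam v => ⟨fun h => ?_, fun h => ?_⟩⟩
  · rintro _ ⟨v, rfl⟩
    exact hCL v
  · rintro _ ⟨v, rfl⟩
    exact hML v
  · rw [← hCM v ((L.smul_mem_iff hlam).1 (h ▸ hCL v)), h]
  · rw [hCM v ((L.smul_mem_iff hlam).1 (h ▸ hML v)), h]
end

section
/- (Eckart–Young, Frobenius norm.) Let Y ∈ ℝ^{n×N} and let λ_1 ≥ … ≥ λ_n ≥ 0 be the eigenvalues of the symmetric positive semidefinite matrix Y Y^T. Then for every 0 ≤ m ≤ n, the infimum of ‖Y − Z‖_F² over all matrices Z ∈ ℝ^{n×N} of rank at most m equals λ_{m+1} + … + λ_n, and it is attained by Z = P Y where P is the orthogonal projection onto a sum of eigenspaces of Y Y^T for the eigenvalues λ_1,…,λ_m. -/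
open Matrix

namespace EckartYoung

variable {n N m r : ℕ}

theorem sum_sq_eq_trace (M : Matrix (Fin n) (Fin N) ℝ) :
    ∑ i, ∑ j, (M i j) ^ 2 = (Mᵀ * M).trace := by
  rw [Finset.sum_comm]
  simp [Matrix.trace, Matrix.mul_apply, sq]

/-- Pythagoras for the projection `Q * Qᵀ`, at the level of Gram matrices. -/
theorem gram_sub_proj (Q : Matrix (Fin n) (Fin r) ℝ) (hQ : Qᵀ * Q = 1)
    (M : Matrix (Fin n) (Fin N) ℝ) :
    (M - Q * Qᵀ * M)ᵀ * (M - Q * Qᵀ * M) = Mᵀ * M - (Qᵀ * M)ᵀ * (Qᵀ * M) := by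
  have h : Qᵀ * (Q * (Qᵀ * M)) = Qᵀ * M := by
    rw [← Matrix.mul_assoc, hQ, Matrix.one_mul]
  simp only [transpose_sub, transpose_mul, transpose_transpose, Matrix.sub_mul, Matrix.mul_sub,
    Matrix.mul_assoc, h]
  abel

theorem sum_sq_sub_proj (Q : Matrix (Fin n) (Fin r) ℝ) (hQ : Qᵀ * Q = 1)
    (M : Matrix (Fin n) (Fin N) ℝ) :
    ∑ i, ∑ j, ((M - Q * Qᵀ * M) i j) ^ 2 =
      (M * Mᵀ).trace - (Qᵀ * (M * Mᵀ) * Q).trace := by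
  rw [sum_sq_eq_trace, gram_sub_proj Q hQ, trace_sub, trace_mul_comm,
    trace_mul_comm _ (Qᵀ * M)]
  simp only [transpose_mul, transpose_transpose, Matrix.mul_assoc]

theorem sum_sq_sub_proj_le (Q : Matrix (Fin n) (Fin r) ℝ) (hQ : Qᵀ * Q = 1)
    (M : Matrix (Fin n) (Fin N) ℝ) :
    ∑ i, ∑ j, ((M - Q * Qᵀ * M) i j) ^ 2 ≤ ∑ i, ∑ j, (M i j) ^ 2 := by
  rw [sum_sq_eq_trace, gram_sub_proj Q hQ, trace_sub, ← sum_sq_eq_trace, ← sum_sq_eq_trace]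
  have : 0 ≤ ∑ i, ∑ j, ((Qᵀ * M) i j) ^ 2 := by positivity
  linarith

theorem sum_sq_col_le_one (Q : Matrix (Fin n) (Fin r) ℝ) (hQ : Qᵀ * Q = 1)
    (V : Matrix (Fin n) (Fin n) ℝ) (hV : Vᵀ * V = 1) (i : Fin n) :
    ∑ k, ((Qᵀ * V) k i) ^ 2 ≤ 1 := by
  have h := congrFun (congrFun (gram_sub_proj Q hQ V) i) i
  rw [hV, Matrix.sub_apply, one_apply_eq, mul_apply, mul_apply] at h
  simp only [transpose_apply (_ - _), transpose_apply (_ * _), ← sq] at h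
  have : 0 ≤ ∑ j, ((V - Q * Qᵀ * V) j i) ^ 2 := by positivity
  linarith

/-- A matrix factors through an orthonormal basis of its column space. -/
theorem exists_orthonormal_columns (Z : Matrix (Fin n) (Fin N) ℝ) :
    ∃ Q : Matrix (Fin n) (Fin Z.rank) ℝ, Qᵀ * Q = 1 ∧ Q * Qᵀ * Z = Z := by
  let U := LinearMap.range (toEuclideanLin Z)
  have hU : Module.finrank ℝ U = Z.rank := (rank_eq_finrank_range_toLin Z
    (EuclideanSpace.basisFun (Fin n) ℝ).toBasis (EuclideanSpace.basisFun (Fin N) ℝ).toBasis).symm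
  let b : OrthonormalBasis (Fin Z.rank) ℝ U :=
    (stdOrthonormalBasis ℝ U).reindex (finCongr hU)
  let Q : Matrix (Fin n) (Fin Z.rank) ℝ := Matrix.of fun i k => (b k : EuclideanSpace ℝ (Fin n)) i
  refine ⟨Q, ?_, ?_⟩
  · ext k l
    have h := orthonormal_iff_ite.mp b.orthonormal k l
    rw [Submodule.coe_inner, PiLp.inner_apply] at h
    simp only [RCLike.inner_apply, conj_trivial] at h
    rw [mul_apply, one_apply, ← h]
    exact Finset.sum_congr rfl fun i _ => mul_comm _ _
  · ext i j
    let z : U := ⟨toEuclideanLin Z (EuclideanSpace.single j 1), LinearMap.mem_range_self _ _⟩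
    have hz : ∀ i, (z : EuclideanSpace ℝ (Fin n)) i = Z i j := fun i => by
      simp [z, toLpLin_apply]
    have h := congrArg (fun u : U => (u : EuclideanSpace ℝ (Fin n)) i) (b.sum_repr' z)
    simp only [hz, Submodule.coe_sum, Submodule.coe_smul, Submodule.coe_inner,
      PiLp.inner_apply, RCLike.inner_apply, conj_trivial, WithLp.ofLp_sum, WithLp.ofLp_smul,
      Finset.sum_apply, Pi.smul_apply, smul_eq_mul] at h
    rw [Matrix.mul_assoc, mul_apply, ← h]
    refine Finset.sum_congr rfl fun k _ => ?_
    rw [mul_apply, mul_comm]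
    congr 1
    exact Finset.sum_congr rfl fun i _ => mul_comm _ _

theorem trace_conj_diagonal (W : Matrix (Fin r) (Fin n) ℝ) (lam : Fin n → ℝ) :
    (W * diagonal lam * Wᵀ).trace = ∑ i, (∑ k, (W k i) ^ 2) * lam i := by
  simp only [trace, diag_apply, mul_apply (M := W * diagonal lam), mul_diagonal, transpose_apply]
  rw [Finset.sum_comm]
  refine Finset.sum_congr rfl fun i _ => ?_
  rw [Finset.sum_mul]
  exact Finset.sum_congr rfl fun k _ => by ring

theorem sum_castLE_add_sum_filter (hmn : m ≤ n) (f : Fin n → ℝ) :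
    ∑ j : Fin m, f (Fin.castLE hmn j) +
      ∑ i ∈ Finset.univ.filter (fun i : Fin n => m ≤ (i : ℕ)), f i = ∑ i, f i := by
  obtain ⟨k, rfl⟩ := Nat.exists_eq_add_of_le hmn
  rw [Finset.sum_filter, Fin.sum_univ_add, Fin.sum_univ_add]
  have hhead (j : Fin m) : ¬ m ≤ (j : ℕ) := j.2.not_ge
  simp [Fin.castAdd, hhead]

/-- A weighted sum of a decreasing nonnegative family with weights in `[0, 1]` of total mass at
most `m` is at most the sum of its first `m` terms. -/
theorem sum_weight_mul_le (hmn : m ≤ n) (lam d : Fin n → ℝ) (hmono : Antitone lam)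
    (hnonneg : ∀ i, 0 ≤ lam i) (hd0 : ∀ i, 0 ≤ d i) (hd1 : ∀ i, d i ≤ 1)
    (hd : ∑ i, d i ≤ m) :
    ∑ i, d i * lam i ≤ ∑ j : Fin m, lam (Fin.castLE hmn j) := by
  obtain ⟨c, hc0, hc1, hc2⟩ : ∃ c : ℝ, 0 ≤ c ∧ (∀ j : Fin m, c ≤ lam (Fin.castLE hmn j)) ∧
      ∀ i : Fin n, m ≤ (i : ℕ) → lam i ≤ c := by
    rcases hmn.lt_or_eq with h | rfl
    · exact ⟨lam ⟨m, h⟩, hnonneg _, fun j => hmono j.2.le, fun i hi => hmono hi⟩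
    · exact ⟨0, le_rfl, fun j => hnonneg _, fun i hi => absurd i.2 hi.not_gt⟩
  have hhead : ∑ j : Fin m, d (Fin.castLE hmn j) * (lam (Fin.castLE hmn j) - c) ≤
      ∑ j : Fin m, (lam (Fin.castLE hmn j) - c) :=
    Finset.sum_le_sum fun j _ => mul_le_of_le_one_left (sub_nonneg.2 (hc1 j)) (hd1 _)
  have htail : ∑ i ∈ Finset.univ.filter (fun i : Fin n => m ≤ (i : ℕ)), d i * (lam i - c) ≤ 0 :=
    Finset.sum_nonpos fun i hi => mul_nonpos_of_nonneg_of_nonpos (hd0 i)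
      (sub_nonpos.2 (hc2 i (Finset.mem_filter.1 hi).2))
  have hsplit := sum_castLE_add_sum_filter hmn fun i => d i * (lam i - c)
  have hall : ∑ i, d i * (lam i - c) = ∑ i, d i * lam i - (∑ i, d i) * c := by
    simp [mul_sub, Finset.sum_sub_distrib, Finset.sum_mul]
  have hconst : ∑ j : Fin m, (lam (Fin.castLE hmn j) - c) =
      ∑ j : Fin m, lam (Fin.castLE hmn j) - m * c := by
    simp [Finset.sum_sub_distrib]
  have := mul_le_mul_of_nonneg_right hd hc0
  linarith

/-- Ky Fan's inequality for the sum of the largest `m` eigenvalues. -/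
theorem trace_compression_le (hmn : m ≤ n) (hr : r ≤ m) (lam : Fin n → ℝ) (hmono : Antitone lam)
    (hnonneg : ∀ i, 0 ≤ lam i) (V : Matrix (Fin n) (Fin n) ℝ) (hV : Vᵀ * V = 1)
    (Q : Matrix (Fin n) (Fin r) ℝ) (hQ : Qᵀ * Q = 1) :
    (Qᵀ * (V * diagonal lam * Vᵀ) * Q).trace ≤ ∑ j : Fin m, lam (Fin.castLE hmn j) := by
  have hconj : Qᵀ * (V * diagonal lam * Vᵀ) * Q = Qᵀ * V * diagonal lam * (Qᵀ * V)ᵀ := by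
    simp only [transpose_mul, transpose_transpose, Matrix.mul_assoc]
  rw [hconj, trace_conj_diagonal]
  refine sum_weight_mul_le hmn lam _ hmono hnonneg (fun i => by positivity)
    (sum_sq_col_le_one Q hQ V hV) ?_
  rw [Finset.sum_comm, sum_sq_eq_trace, trace_mul_comm]
  have hVV : V * Vᵀ = 1 := mul_eq_one_comm.1 hV
  have hgram : Qᵀ * V * (Qᵀ * V)ᵀ = 1 := by
    rw [transpose_mul, transpose_transpose, Matrix.mul_assoc, ← Matrix.mul_assoc V, hVV,
      Matrix.one_mul, hQ]
  rw [hgram, trace_one, Fintype.card_fin]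
  exact_mod_cast hr

end EckartYoung

/-- Eckart–Young (Frobenius norm): for `Y ∈ ℝ^{n×N}` with `Y Yᵀ` having eigenvalues
`λ_1 ≥ ... ≥ λ_n ≥ 0` (encoded by an orthogonal diagonalization), and any `m ≤ n`,
the least value of `‖Y − Z‖_F²` over matrices `Z` of rank at most `m` is
`λ_{m+1} + ... + λ_n`, and it is attained by `Z = P Y` where `P = Q₀ Q₀ᵀ` is the
orthogonal projection onto the span of `m` orthonormal eigenvectors of `Y Yᵀ`
(the columns of `Q₀`) for the eigenvalues `λ_1,...,λ_m`. -/
theorem stmt_4 (n N m : ℕ) (hmn : m ≤ n)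
    (Y : Matrix (Fin n) (Fin N) ℝ)
    (lam : Fin n → ℝ)
    (hmono : ∀ i j : Fin n, i ≤ j → lam j ≤ lam i)
    (hnonneg : ∀ i, 0 ≤ lam i)
    (V : Matrix (Fin n) (Fin n) ℝ) (hV : Vᵀ * V = 1)
    (hdiag : (Y * Yᵀ) * V = V * Matrix.diagonal lam) :
    IsLeast {r | ∃ Z : Matrix (Fin n) (Fin N) ℝ, Z.rank ≤ m ∧
        r = ∑ i, ∑ j, ((Y - Z) i j) ^ 2}
      (∑ i ∈ Finset.univ.filter (fun i : Fin n => m ≤ (i : ℕ)), lam i) ∧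
    (∀ Q₀ : Matrix (Fin n) (Fin m) ℝ, Q₀ᵀ * Q₀ = 1 →
      (∀ j : Fin m, (Y * Yᵀ).mulVec (fun i => Q₀ i j) =
        lam (Fin.castLE hmn j) • (fun i => Q₀ i j)) →
      (Q₀ * Q₀ᵀ * Y).rank ≤ m ∧
      ∑ i, ∑ j, ((Y - Q₀ * Q₀ᵀ * Y) i j) ^ 2 =
        ∑ i ∈ Finset.univ.filter (fun i : Fin n => m ≤ (i : ℕ)), lam i) := by
  have hVV : V * Vᵀ = 1 := mul_eq_one_comm.1 hV
  have hA : Y * Yᵀ = V * diagonal lam * Vᵀ := by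
    rw [← hdiag, Matrix.mul_assoc, hVV, Matrix.mul_one]
  have htr : (Y * Yᵀ).trace = ∑ i, lam i := by
    rw [hA, trace_mul_comm, ← Matrix.mul_assoc, hV, Matrix.one_mul, trace_diagonal]
  have hsplit := EckartYoung.sum_castLE_add_sum_filter hmn lam
  have hproj : ∀ Q₀ : Matrix (Fin n) (Fin m) ℝ, Q₀ᵀ * Q₀ = 1 →
      (∀ j : Fin m, (Y * Yᵀ).mulVec (fun i => Q₀ i j) =
        lam (Fin.castLE hmn j) • (fun i => Q₀ i j)) →
      (Q₀ * Q₀ᵀ * Y).rank ≤ m ∧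
      ∑ i, ∑ j, ((Y - Q₀ * Q₀ᵀ * Y) i j) ^ 2 =
        ∑ i ∈ Finset.univ.filter (fun i : Fin n => m ≤ (i : ℕ)), lam i := by
    intro Q₀ hQ heig
    refine ⟨?_, ?_⟩
    · rw [Matrix.mul_assoc]
      exact (rank_mul_le_left _ _).trans (by simpa using rank_le_width Q₀)
    · have hAQ : Y * Yᵀ * Q₀ = Q₀ * diagonal fun j => lam (Fin.castLE hmn j) := by
        ext i j
        rw [mul_diagonal, mul_comm]
        exact congrFun (heig j) i
      rw [EckartYoung.sum_sq_sub_proj Q₀ hQ, htr, Matrix.mul_assoc, hAQ, ← Matrix.mul_assoc, hQ,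
        Matrix.one_mul, trace_diagonal]
      linarith
  refine ⟨⟨?_, ?_⟩, hproj⟩
  · let Q₀ : Matrix (Fin n) (Fin m) ℝ := V.submatrix id (Fin.castLE hmn)
    have hQ : Q₀ᵀ * Q₀ = 1 := by
      ext j k
      have h := congrFun (congrFun hV (Fin.castLE hmn j)) (Fin.castLE hmn k)
      simpa [Q₀, mul_apply, one_apply] using h
    obtain ⟨hrank, hval⟩ := hproj Q₀ hQ fun j => by
      ext i
      have h := congrFun (congrFun hdiag i) (Fin.castLE hmn j)
      rw [mul_diagonal, mul_comm] at h
      exact h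
    exact ⟨_, hrank, hval.symm⟩
  · rintro _ ⟨Z, hZ, rfl⟩
    obtain ⟨Q, hQ, hQZ⟩ := EckartYoung.exists_orthonormal_columns Z
    have hle := EckartYoung.sum_sq_sub_proj_le Q hQ (Y - Z)
    have hres : Y - Z - Q * Qᵀ * (Y - Z) = Y - Q * Qᵀ * Y := by
      rw [Matrix.mul_sub, hQZ]
      abel
    rw [hres, EckartYoung.sum_sq_sub_proj Q hQ, htr, hA] at hle
    have hfan := EckartYoung.trace_compression_le hmn hZ lam hmono hnonneg V hV Q hQ
    linarith
end

section
/- Let C = Q Λ Q^T, where Q ∈ ℝ^{n×m} satisfies Q^T Q = I_m and Λ ∈ ℝ^{m×m} is an invertible diagonal matrix. Let E ∈ ℝ^{n×n}, and suppose t ↦ (Q(t), Λ(t)) ∈ ℝ^{n×m} × ℝ^{m×m} is defined on a neighborhood of 0 in ℝ, is differentiable at 0, and satisfies Q(0) = Q, Λ(0) = Λ, and (C + tE) Q(t) = Q(t) Λ(t) for all t in that neighborhood. Then (I_n − Q Q^T) Q'(0) = (I_n − Q Q^T) E Q Λ^{-1}, where Q'(0) denotes the derivative of Q(t) at t = 0.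 -/
open Matrix

/-- Entrywise product rule for matrix-valued functions of a real variable. -/
theorem hasDerivAt_matrix_mul_apply {l m n : Type*} [Fintype m]
    {A : ℝ → Matrix l m ℝ} {B : ℝ → Matrix m n ℝ} {A' : Matrix l m ℝ} {B' : Matrix m n ℝ} {x : ℝ}
    (hA : ∀ i j, HasDerivAt (fun t => A t i j) (A' i j) x)
    (hB : ∀ i j, HasDerivAt (fun t => B t i j) (B' i j) x) (i : l) (j : n) :
    HasDerivAt (fun t => (A t * B t) i j) ((A' * B x + A x * B') i j) x := by
  simp only [Matrix.add_apply, Matrix.mul_apply, ← Finset.sum_add_distrib]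
  exact HasDerivAt.fun_sum fun k _ => (hA i k).fun_mul (hB k j)

/-- First-order eigenvector perturbation identity: let `C = Q Λ Qᵀ` with
`Qᵀ Q = 1` and `Λ = diagonal d` invertible, let `E` be any `n × n` matrix, and
let `t ↦ (Q(t), Λ(t))` be differentiable at `0` (entrywise, with derivatives
`Q'` and `L'`), with `Q(0) = Q`, `Λ(0) = Λ`, and `(C + t E) Q(t) = Q(t) Λ(t)`
for all `t` near `0`.  Then `(I − Q Qᵀ) Q'(0) = (I − Q Qᵀ) E Q Λ⁻¹`. -/
theorem stmt_6 (n m : ℕ)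
    (Q : Matrix (Fin n) (Fin m) ℝ) (hQ : Qᵀ * Q = 1)
    (d : Fin m → ℝ) (hd : ∀ i, d i ≠ 0)
    (C : Matrix (Fin n) (Fin n) ℝ) (hC : C = Q * Matrix.diagonal d * Qᵀ)
    (E : Matrix (Fin n) (Fin n) ℝ)
    (Qf : ℝ → Matrix (Fin n) (Fin m) ℝ) (Lf : ℝ → Matrix (Fin m) (Fin m) ℝ)
    (Q' : Matrix (Fin n) (Fin m) ℝ) (L' : Matrix (Fin m) (Fin m) ℝ)
    (hQf0 : Qf 0 = Q) (hLf0 : Lf 0 = Matrix.diagonal d)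
    (hQdiff : ∀ i j, HasDerivAt (fun t => Qf t i j) (Q' i j) 0)
    (hLdiff : ∀ i j, HasDerivAt (fun t => Lf t i j) (L' i j) 0)
    (heig : ∀ᶠ t in nhds (0 : ℝ), (C + t • E) * Qf t = Qf t * Lf t) :
    (1 - Q * Qᵀ) * Q' = (1 - Q * Qᵀ) * E * Q * (Matrix.diagonal d)⁻¹ := by
  have hpencil : ∀ i j, HasDerivAt (fun t : ℝ => (C + t • E) i j) (E i j) 0 := fun i j => by
    simpa using ((hasDerivAt_id (0 : ℝ)).mul_const (E i j)).const_add (C i j)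
  have hderiv : E * Q + C * Q' = Q' * Matrix.diagonal d + Q * L' := by
    ext i j
    have hleft := hasDerivAt_matrix_mul_apply hpencil hQdiff i j
    have hright := hasDerivAt_matrix_mul_apply hQdiff hLdiff i j
    have heq := hleft.unique (hright.congr_of_eventuallyEq (heig.mono fun t ht => by simp only [ht]))
    simpa only [hQf0, hLf0, zero_smul, add_zero] using heq
  have hproj : (1 - Q * Qᵀ) * Q = 0 := by
    rw [Matrix.sub_mul, Matrix.mul_assoc, hQ, Matrix.one_mul, Matrix.mul_one, sub_self]
  have hprojC : (1 - Q * Qᵀ) * C = 0 := by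
    rw [hC, ← Matrix.mul_assoc, ← Matrix.mul_assoc, hproj, Matrix.zero_mul, Matrix.zero_mul]
  have hkey : (1 - Q * Qᵀ) * E * Q = (1 - Q * Qᵀ) * Q' * Matrix.diagonal d := by
    have h := congrArg ((1 - Q * Qᵀ) * ·) hderiv
    simpa only [Matrix.mul_add, ← Matrix.mul_assoc, hproj, hprojC, Matrix.zero_mul, add_zero]
      using h
  have hunit : IsUnit (Matrix.diagonal d).det := by
    rw [Matrix.det_diagonal]
    exact (Finset.prod_ne_zero_iff.mpr fun i _ => hd i).isUnit
  rw [hkey, Matrix.mul_nonsing_inv_cancel_right _ _ hunit]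
end
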